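/- arXiv:1910.14251 — 8 statements merged into one kernel-verified Lean document; each statement's English description precedes it below -/
import Mathlib

section
/- Let $a, b \ge 1$ be integers. In the polynomial ring $\mathbb{Z}[T]$, the ideal generated by the two polynomials $1 + T + \cdots + T^{a-1}$ and $1 + T + \cdots + T^{b-1}$ equals the principal ideal generated by $1 + T + \cdots + T^{\gcd(a,b)-1}$. -/
/-!
Write `[n] = 1 + T + ⋯ + T^(n-1)`. Splitting off the lowest `c` terms gives
`[c + a] = [c] + T^c [a]`, so the ideals `([a], [c + a])` and `([a], [c])` coincide. The pair of
exponents can therefore be run through the subtractive Euclidean algorithm, which preserves the gcd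
and ends at `(d, 0)` with `d = gcd a b`; there `[0] = 0` and the ideal is `([d])`.
-/

open Polynomial in
/-- One step of the subtractive Euclidean algorithm on the exponents. -/
lemma span_geom_sum_add (a c : ℕ) :
    Ideal.span ({∑ i ∈ Finset.range a, (X : ℤ[X]) ^ i,
        ∑ i ∈ Finset.range (c + a), (X : ℤ[X]) ^ i} : Set ℤ[X]) =
      Ideal.span ({∑ i ∈ Finset.range a, (X : ℤ[X]) ^ i,
        ∑ i ∈ Finset.range c, (X : ℤ[X]) ^ i} : Set ℤ[X]) := by
  rw [Finset.sum_range_add]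
  simp only [pow_add, ← Finset.mul_sum]
  rw [Ideal.span_pair_add_mul_left]

open Polynomial in
/-- Allowing zero exponents, with `[0] = 0`, makes the Euclidean induction close up. -/
lemma span_geom_sum_pair (a b : ℕ) :
    Ideal.span ({∑ i ∈ Finset.range a, (X : ℤ[X]) ^ i,
        ∑ i ∈ Finset.range b, (X : ℤ[X]) ^ i} : Set ℤ[X]) =
      Ideal.span ({∑ i ∈ Finset.range (Nat.gcd a b), (X : ℤ[X]) ^ i} : Set ℤ[X]) := by
  induction hn : a + b using Nat.strong_induction_on generalizing a b with
  | _ n ih =>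
    wlog hab : a ≤ b generalizing a b
    · rw [Ideal.span_pair_comm, Nat.gcd_comm]
      exact this b a (by omega) (by omega)
    obtain rfl | ha := Nat.eq_zero_or_pos a
    · rw [Ideal.span_pair_comm, Finset.sum_range_zero, Ideal.span_pair_zero, Nat.gcd_zero_left]
    · obtain ⟨c, rfl⟩ := Nat.exists_eq_add_of_le' hab
      rw [span_geom_sum_add, Nat.gcd_add_self_right]
      exact ih (a + c) (by omega) a c rfl

/-- For integers `a, b ≥ 1`, in `ℤ[T]` the ideal generated by
`1 + T + ⋯ + T^(a-1)` and `1 + T + ⋯ + T^(b-1)` equals the principal ideal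
generated by `1 + T + ⋯ + T^(gcd a b - 1)`. -/
theorem ideal_geom_sum_pair_eq_span_gcd (a b : ℕ) (ha : 1 ≤ a) (hb : 1 ≤ b) :
    Ideal.span ({∑ i ∈ Finset.range a, (Polynomial.X : Polynomial ℤ) ^ i,
        ∑ i ∈ Finset.range b, (Polynomial.X : Polynomial ℤ) ^ i} : Set (Polynomial ℤ)) =
      Ideal.span ({∑ i ∈ Finset.range (Nat.gcd a b),
        (Polynomial.X : Polynomial ℤ) ^ i} : Set (Polynomial ℤ)) := by
  exact span_geom_sum_pair a b
end

section
/- Let $n, d \ge 2$ be coprime integers, and let $\varphi_{n,d} \in \mathbb{Z}[T]$ be the unique polynomial satisfying $\varphi_{n,d}(T) \cdot (T^n - 1)(T^d - 1) = (T^{nd} - 1)(T - 1)$. Then in $\mathbb{Z}[T]$ the ideal generated by $1 + T^n + T^{2n} + \cdots + T^{(d-1)n}$ and $1 + T^d + T^{2d} + \cdots + T^{(n-1)d}$ equals the principal ideal generated by $\varphi_{n,d}$; consequently the quotient ring $R := \mathbb{Z}[T]/\big(1 + T^n + \cdots + T^{(d-1)n},\; 1 + T^d + \cdots + T^{(n-1)d}\big)$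 is isomorphic as a ring to $\mathbb{Z}[T]/(\varphi_{n,d}(T))$. -/
/-! Write `[m] = 1 + T + ⋯ + T^(m-1)`. Cancelling in the defining equation of `φ` shows that the two
generators are `φ * [d]` and `φ * [n]`, so both lie in `(φ)`. Conversely, `[n]` and `[d]` generate the
unit ideal of `ℤ[T]`: choosing `a, b` with `n * a = d * b + 1` gives
`T - 1 = (T^(n*a) - 1) - T * (T^(d*b) - 1)`, whose two terms are multiples of `T^n - 1` and `T^d - 1`.
Multiplying by `φ` and cancelling `T - 1` writes `φ` as a combination of the generators. -/

open Polynomial in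
/-- The integral Bézout relation between `X ^ n - 1` and `X ^ d - 1`. It holds over `ℤ` because the
Euclidean algorithm on the exponents involves no division of coefficients. -/
lemma exists_bezout_X_pow_sub_one {n d : ℕ} (hd : 2 ≤ d) (hnd : Nat.Coprime n d) :
    ∃ u v : ℤ[X], (X ^ n - 1) * u - X * ((X ^ d - 1) * v) = X - 1 := by
  obtain ⟨a, ha⟩ := Nat.exists_mul_mod_eq_one_of_coprime hnd (by omega)
  have hab : n * a = d * (n * a / d) + 1 := by
    have := Nat.div_add_mod (n * a) d
    omega
  obtain ⟨u, hu⟩ : (X ^ n - 1 : ℤ[X]) ∣ X ^ (n * a) - 1 := by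
    simpa [pow_mul] using sub_dvd_pow_sub_pow (X ^ n : ℤ[X]) 1 a
  obtain ⟨v, hv⟩ : (X ^ d - 1 : ℤ[X]) ∣ X ^ (d * (n * a / d)) - 1 := by
    simpa [pow_mul] using sub_dvd_pow_sub_pow (X ^ d : ℤ[X]) 1 (n * a / d)
  refine ⟨u, v, ?_⟩
  rw [← hu, ← hv, hab, pow_succ, ← hab]
  ring

open Polynomial in
/-- The generator `1 + X ^ n + ⋯ + X ^ ((d - 1) * n)` is `φ * (X ^ d - 1) / (X - 1)`. -/
lemma phi_mul_X_pow_sub_one {n d : ℕ} (hn : n ≠ 0) {φ : ℤ[X]}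
    (hφ : φ * ((X ^ n - 1) * (X ^ d - 1)) = (X ^ (n * d) - 1) * (X - 1)) :
    φ * (X ^ d - 1) = (∑ i ∈ Finset.range d, (X : ℤ[X]) ^ (n * i)) * (X - 1) := by
  have hne : (X ^ n - 1 : ℤ[X]) ≠ 0 := by
    simpa using X_pow_sub_C_ne_zero (Nat.pos_of_ne_zero hn) (1 : ℤ)
  have hgeom : (∑ i ∈ Finset.range d, (X : ℤ[X]) ^ (n * i)) * (X ^ n - 1) = X ^ (n * d) - 1 := by
    simpa only [pow_mul] using geom_sum_mul (X ^ n : ℤ[X]) d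
  apply mul_right_cancel₀ hne
  linear_combination hφ - (X - 1) * hgeom

open Polynomial in
lemma geom_sum_mem_span_phi {n d : ℕ} (hn : n ≠ 0) {φ : ℤ[X]}
    (hφ : φ * ((X ^ n - 1) * (X ^ d - 1)) = (X ^ (n * d) - 1) * (X - 1)) :
    (∑ i ∈ Finset.range d, (X : ℤ[X]) ^ (n * i)) ∈ Ideal.span {φ} := by
  have hne : (X - 1 : ℤ[X]) ≠ 0 := by simpa using X_sub_C_ne_zero (1 : ℤ)
  refine Ideal.mem_span_singleton.2 ⟨∑ i ∈ Finset.range d, X ^ i, mul_right_cancel₀ hne ?_⟩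
  rw [mul_assoc, geom_sum_mul, phi_mul_X_pow_sub_one hn hφ]

/-- For coprime `n, d ≥ 2`, letting `φ` be the polynomial with
`φ · (T^n - 1)(T^d - 1) = (T^{nd} - 1)(T - 1)`, the ideal of `ℤ[T]` generated by
`1 + T^n + ⋯ + T^{(d-1)n}` and `1 + T^d + ⋯ + T^{(n-1)d}` equals the principal
ideal `(φ)`, and consequently the corresponding quotient rings are isomorphic. -/
theorem catalan_ideal_eq_span_phi (n d : ℕ) (hn : 2 ≤ n) (hd : 2 ≤ d)
    (hnd : Nat.Coprime n d) (φ : Polynomial ℤ)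
    (hφ : φ * ((Polynomial.X ^ n - 1) * (Polynomial.X ^ d - 1)) =
      (Polynomial.X ^ (n * d) - 1) * (Polynomial.X - 1)) :
    Ideal.span ({∑ i ∈ Finset.range d, (Polynomial.X : Polynomial ℤ) ^ (n * i),
        ∑ i ∈ Finset.range n, (Polynomial.X : Polynomial ℤ) ^ (d * i)} : Set (Polynomial ℤ)) =
      Ideal.span ({φ} : Set (Polynomial ℤ)) ∧
    Nonempty
      ((Polynomial ℤ ⧸ Ideal.span
          ({∑ i ∈ Finset.range d, (Polynomial.X : Polynomial ℤ) ^ (n * i),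
            ∑ i ∈ Finset.range n, (Polynomial.X : Polynomial ℤ) ^ (d * i)} :
              Set (Polynomial ℤ))) ≃+*
        (Polynomial ℤ ⧸ Ideal.span ({φ} : Set (Polynomial ℤ)))) := by
  have hφ' : φ * ((Polynomial.X ^ d - 1) * (Polynomial.X ^ n - 1)) =
      (Polynomial.X ^ (d * n) - 1) * (Polynomial.X - 1) := by
    rw [mul_comm d n, ← hφ]
    ring
  have hn0 : n ≠ 0 := by omega
  have hd0 : d ≠ 0 := by omega
  have key : Ideal.span ({∑ i ∈ Finset.range d, (Polynomial.X : Polynomial ℤ) ^ (n * i),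
        ∑ i ∈ Finset.range n, (Polynomial.X : Polynomial ℤ) ^ (d * i)} : Set (Polynomial ℤ)) =
      Ideal.span ({φ} : Set (Polynomial ℤ)) := by
    apply le_antisymm
    · rw [Ideal.span_le, Set.insert_subset_iff, Set.singleton_subset_iff]
      exact ⟨geom_sum_mem_span_phi hn0 hφ, geom_sum_mem_span_phi hd0 hφ'⟩
    · rw [Ideal.span_singleton_le_iff_mem, Ideal.mem_span_pair]
      obtain ⟨u, v, huv⟩ := exists_bezout_X_pow_sub_one hd hnd
      have hne : (Polynomial.X - 1 : Polynomial ℤ) ≠ 0 := by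
        simpa using Polynomial.X_sub_C_ne_zero (1 : ℤ)
      refine ⟨-(Polynomial.X * v), u, mul_right_cancel₀ hne ?_⟩
      linear_combination φ * huv + Polynomial.X * v * phi_mul_X_pow_sub_one hn0 hφ -
        u * phi_mul_X_pow_sub_one hd0 hφ'
  exact ⟨key, ⟨Ideal.quotEquivOfEq key⟩⟩
end

section
/- Let $n, d \ge 2$ be coprime integers and let $R := \mathbb{Z}[T]/\big(1 + T^n + T^{2n} + \cdots + T^{(d-1)n},\; 1 + T^d + T^{2d} + \cdots + T^{(n-1)d}\big)$. Then the family of images in $R$ of the monomials $T^{da + nb}$, indexed by pairs of integers $(a,b)$ with $0 \le a \le n-2$ and $0 \le b \le d-2$, is a basis of $R$ as a $\mathbb{Z}$-module (in particular $R$ is a free $\mathbb{Z}$-module of rank $(n-1)(d-1)$). -/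
/-!
In the quotient `R`, put `x = T^d` and `y = T^n`. The two generators of the ideal say that
`1 + x + ⋯ + x^(n-1) = 0` and `1 + y + ⋯ + y^(d-1) = 0`, so there is a ring homomorphism to `R`
from `S = A ⊗ B`, where `A = ℤ[X]/(1 + ⋯ + X^(n-1))` and `B = ℤ[X]/(1 + ⋯ + X^(d-1))`
(`toQuotient`). As `A` and `B` have power bases, the `x^a y^b` with `a ≤ n-2`, `b ≤ d-2` are a
basis of `S`, and the theorem amounts to `R` being isomorphic to `S`.

Since `x^n = 1` and `y^d = 1`, exponents of `x` and `y` matter only modulo `n` and `d`. Choose `u`,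
`v` with `d * u ≡ 1 [MOD n]` and `n * v ≡ 1 [MOD d]`. In `R` one gets `T = x^u * y^v`, because
`d * u + n * v ≡ 1 [MOD n * d]` and `T^(n*d) = 1`; hence `S → R` is surjective, which gives spanning.
Conversely `T ↦ x^u * y^v` defines `R → S` (`exists_ofQuotient`) sending `T^d` to `x` and `T^n` to `y`,
which maps the monomial family to the basis of `S` and so gives linear independence.
-/

/-- The ideal of `ℤ[T]` generated by `1 + T^n + ⋯ + T^{(d-1)n}` and
`1 + T^d + ⋯ + T^{(n-1)d}`. -/
noncomputable def catalanIdeal (n d : ℕ) : Ideal (Polynomial ℤ) :=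
  Ideal.span ({∑ i ∈ Finset.range d, (Polynomial.X : Polynomial ℤ) ^ (n * i),
    ∑ i ∈ Finset.range n, (Polynomial.X : Polynomial ℤ) ^ (d * i)} : Set (Polynomial ℤ))

open Polynomial TensorProduct

namespace CatalanQuotient

/-- The ring `ℤ[X]/(1 + X + ⋯ + X^(m-1))`. -/
abbrev GeomRing (m : ℕ) : Type := AdjoinRoot (∑ i ∈ Finset.range m, (X : ℤ[X]) ^ i)

lemma pow_eq_one_of_geom_sum {C : Type*} [CommRing C] {m : ℕ} {c : C}
    (h : ∑ i ∈ Finset.range m, c ^ i = 0) : c ^ m = 1 := by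
  have := geom_sum_mul c m
  rw [h, zero_mul] at this
  exact (sub_eq_zero.mp this.symm)

lemma pow_eq_pow_of_modEq {C : Type*} [CommRing C] {m k l : ℕ} {c : C}
    (h : c ^ m = 1) (hkl : k ≡ l [MOD m]) : c ^ k = c ^ l := by
  rw [← pow_mod_orderOf c k, ← pow_mod_orderOf c l]
  exact congrArg _ (hkl.of_dvd (orderOf_dvd_of_pow_eq_one h))

lemma geom_sum_root (m : ℕ) :
    ∑ i ∈ Finset.range m, (AdjoinRoot.root (∑ i ∈ Finset.range m, (X : ℤ[X]) ^ i)) ^ i = 0 := by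
  have := AdjoinRoot.eval₂_root (∑ i ∈ Finset.range m, (X : ℤ[X]) ^ i)
  simpa [eval₂_finsetSum] using this

/-- The powers `1, X, …, X^(m-2)` form a `ℤ`-basis, as `1 + ⋯ + X^(m-1)` is monic of degree
`m - 1`. -/
lemma exists_basis (m : ℕ) (hm : 2 ≤ m) : ∃ b : Module.Basis (Fin (m - 1)) ℤ (GeomRing m),
    ∀ i, b i = (AdjoinRoot.root (∑ i ∈ Finset.range m, (X : ℤ[X]) ^ i)) ^ (i : ℕ) := by
  have hmon : (∑ i ∈ Finset.range m, (X : ℤ[X]) ^ i).Monic := monic_geom_sum_X (by omega)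
  have hdeg : (∑ i ∈ Finset.range m, (X : ℤ[X]) ^ i).natDegree = m - 1 := by
    have h := congrArg natDegree (geom_sum_mul (X : ℤ[X]) m)
    rw [hmon.natDegree_mul (by simpa using monic_X_sub_C (1 : ℤ))] at h
    rw [← C_1, natDegree_X_pow_sub_C, natDegree_X_sub_C] at h
    omega
  refine ⟨(AdjoinRoot.powerBasis' hmon).basis.reindex (finCongr hdeg), fun i => ?_⟩
  simp only [Module.Basis.reindex_apply, PowerBasis.basis_eq_pow, AdjoinRoot.powerBasis'_gen]
  rfl

/-- The universal property of `ℤ[X]/(1 + X + ⋯ + X^(m-1))`. -/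
noncomputable def liftGeom {C : Type*} [CommRing C] [Algebra ℤ C] {m : ℕ} (c : C)
    (h : ∑ i ∈ Finset.range m, c ^ i = 0) : GeomRing m →ₐ[ℤ] C :=
  AdjoinRoot.liftAlgHom _ (Algebra.ofId ℤ C) c (by simpa [eval₂_finsetSum] using h)

lemma liftGeom_root {C : Type*} [CommRing C] [Algebra ℤ C] {m : ℕ} (c : C)
    (h : ∑ i ∈ Finset.range m, c ^ i = 0) :
    liftGeom c h (AdjoinRoot.root (∑ i ∈ Finset.range m, (X : ℤ[X]) ^ i)) = c := by
  simp [liftGeom]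

/-- The tensor product `ℤ[X]/(1 + ⋯ + X^(n-1)) ⊗ ℤ[Y]/(1 + ⋯ + Y^(d-1))`. -/
abbrev S (n d : ℕ) : Type := GeomRing n ⊗[ℤ] GeomRing d

/-- The class `x` of the first variable in `S n d`. -/
noncomputable def xS (n d : ℕ) : S n d :=
  AdjoinRoot.root (∑ i ∈ Finset.range n, (X : ℤ[X]) ^ i) ⊗ₜ 1

/-- The class `y` of the second variable in `S n d`. -/
noncomputable def yS (n d : ℕ) : S n d :=
  1 ⊗ₜ AdjoinRoot.root (∑ i ∈ Finset.range d, (X : ℤ[X]) ^ i)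

lemma geom_sum_xS (n d : ℕ) : ∑ i ∈ Finset.range n, xS n d ^ i = 0 := by
  simp only [xS, Algebra.TensorProduct.tmul_pow, one_pow, ← TensorProduct.sum_tmul,
    geom_sum_root, TensorProduct.zero_tmul]

lemma geom_sum_yS (n d : ℕ) : ∑ i ∈ Finset.range d, yS n d ^ i = 0 := by
  simp only [yS, Algebra.TensorProduct.tmul_pow, one_pow, ← TensorProduct.tmul_sum,
    geom_sum_root, TensorProduct.tmul_zero]

lemma exists_basis_S (n d : ℕ) (hn : 2 ≤ n) (hd : 2 ≤ d) :
    ∃ b : Module.Basis (Fin (n - 1) × Fin (d - 1)) ℤ (S n d),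
      ∀ i, b i = xS n d ^ (i.1 : ℕ) * yS n d ^ (i.2 : ℕ) := by
  obtain ⟨b, hb⟩ := exists_basis n hn
  obtain ⟨c, hc⟩ := exists_basis d hd
  refine ⟨b.tensorProduct c, fun i => ?_⟩
  -- `.trans` rather than `rw`: the two `ℤ`-module structures on `S n d`, that of the tensor product
  -- and that of an additive group, agree only up to unfolding.
  refine (Module.Basis.tensorProduct_apply' b c i).trans ?_
  rw [hb, hc]
  simp [xS, yS, Algebra.TensorProduct.tmul_pow]

/-- The class of `T` in the quotient ring. -/
noncomputable def tR (n d : ℕ) : ℤ[X] ⧸ catalanIdeal n d := Ideal.Quotient.mk _ X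

lemma geom_sum_tR_n (n d : ℕ) : ∑ i ∈ Finset.range d, (tR n d ^ n) ^ i = 0 := by
  have : Ideal.Quotient.mk (catalanIdeal n d) (∑ i ∈ Finset.range d, X ^ (n * i)) = 0 :=
    Ideal.Quotient.eq_zero_iff_mem.mpr (Ideal.subset_span (by simp))
  simpa [tR, ← pow_mul] using this

lemma geom_sum_tR_d (n d : ℕ) : ∑ i ∈ Finset.range n, (tR n d ^ d) ^ i = 0 := by
  have : Ideal.Quotient.mk (catalanIdeal n d) (∑ i ∈ Finset.range n, X ^ (d * i)) = 0 :=
    Ideal.Quotient.eq_zero_iff_mem.mpr (Ideal.subset_span (by simp))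
  simpa [tR, ← pow_mul] using this

/-- The homomorphism `S → R` with `x ↦ T^d` and `y ↦ T^n`. -/
noncomputable def toQuotient (n d : ℕ) : S n d →ₐ[ℤ] ℤ[X] ⧸ catalanIdeal n d :=
  Algebra.TensorProduct.productMap (liftGeom _ (geom_sum_tR_d n d)) (liftGeom _ (geom_sum_tR_n n d))

lemma toQuotient_xS (n d : ℕ) : toQuotient n d (xS n d) = tR n d ^ d := by
  refine (Algebra.TensorProduct.productMap_apply_tmul _ _ _ _).trans ?_
  rw [liftGeom_root, map_one, mul_one]

lemma toQuotient_yS (n d : ℕ) : toQuotient n d (yS n d) = tR n d ^ n := by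
  refine (Algebra.TensorProduct.productMap_apply_tmul _ _ _ _).trans ?_
  rw [liftGeom_root, map_one, one_mul]

lemma exists_inverses {n d : ℕ} (hn : 2 ≤ n) (hd : 2 ≤ d) (hnd : n.Coprime d) :
    ∃ u v, d * u ≡ 1 [MOD n] ∧ n * v ≡ 1 [MOD d] := by
  obtain ⟨u, hu⟩ := Nat.exists_mul_mod_eq_one_of_coprime hnd.symm (by omega)
  obtain ⟨v, hv⟩ := Nat.exists_mul_mod_eq_one_of_coprime hnd (by omega)
  exact ⟨u, v, by rw [Nat.ModEq, hu.2, Nat.mod_eq_of_lt (by omega)],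
    by rw [Nat.ModEq, hv.2, Nat.mod_eq_of_lt (by omega)]⟩

/-- The class `T` generates `R` and is the image of `x^u * y^v`, because `T^(n*d) = 1` and
`d * u + n * v ≡ 1 [MOD n * d]`. -/
lemma toQuotient_surjective {n d : ℕ} (hn : 2 ≤ n) (hd : 2 ≤ d) (hnd : n.Coprime d) :
    Function.Surjective (toQuotient n d) := by
  obtain ⟨u, v, hu, hv⟩ := exists_inverses hn hd hnd
  have hT : toQuotient n d (xS n d ^ u * yS n d ^ v) = tR n d := by
    have h1 : tR n d ^ (n * d) = 1 := by
      rw [pow_mul]; exact pow_eq_one_of_geom_sum (geom_sum_tR_n n d)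
    have h2 : d * u + n * v ≡ 1 [MOD n * d] := by
      refine (Nat.modEq_and_modEq_iff_modEq_mul hnd).mp ⟨?_, ?_⟩
      · simpa [Nat.ModEq] using hu
      · simpa [Nat.ModEq] using hv
    rw [map_mul, map_pow, map_pow, toQuotient_xS, toQuotient_yS, ← pow_mul, ← pow_mul, ← pow_add,
      pow_eq_pow_of_modEq h1 h2, pow_one]
  intro r
  obtain ⟨p, rfl⟩ := Ideal.Quotient.mk_surjective r
  refine ⟨aeval (xS n d ^ u * yS n d ^ v) p, ?_⟩
  rw [← aeval_algHom_apply, hT, tR]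
  exact (aeval_algHom_apply (Ideal.Quotient.mkₐ ℤ (catalanIdeal n d)) X p).trans (by simp)

/-- There is a homomorphism `R → S` with `T^d ↦ x` and `T^n ↦ y`. -/
lemma exists_ofQuotient {n d : ℕ} (hn : 2 ≤ n) (hd : 2 ≤ d) (hnd : n.Coprime d) :
    ∃ f : (ℤ[X] ⧸ catalanIdeal n d) →ₐ[ℤ] S n d,
      f (tR n d ^ d) = xS n d ∧ f (tR n d ^ n) = yS n d := by
  obtain ⟨u, v, hu, hv⟩ := exists_inverses hn hd hnd
  have hx := pow_eq_one_of_geom_sum (geom_sum_xS n d)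
  have hy := pow_eq_one_of_geom_sum (geom_sum_yS n d)
  have hTd : (xS n d ^ u * yS n d ^ v) ^ d = xS n d := by
    rw [mul_pow, ← pow_mul, ← pow_mul, mul_comm u, mul_comm v, pow_eq_pow_of_modEq hx hu,
      pow_mul, hy, one_pow, mul_one, pow_one]
  have hTn : (xS n d ^ u * yS n d ^ v) ^ n = yS n d := by
    rw [mul_pow, ← pow_mul, ← pow_mul, mul_comm u, mul_comm v, pow_eq_pow_of_modEq hy hv,
      pow_mul, hx, one_pow, one_mul, pow_one]
  have hker : ∀ p ∈ catalanIdeal n d, aeval (xS n d ^ u * yS n d ^ v) p = 0 := by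
    intro p hp
    have hle : catalanIdeal n d ≤
        RingHom.ker (aeval (R := ℤ) (xS n d ^ u * yS n d ^ v)) := by
      refine Ideal.span_le.mpr ?_
      rintro _ (rfl | rfl)
      · simp only [SetLike.mem_coe, RingHom.mem_ker, map_sum, map_pow, aeval_X, pow_mul, hTn,
          geom_sum_yS]
      · simp only [SetLike.mem_coe, RingHom.mem_ker, map_sum, map_pow, aeval_X, pow_mul, hTd,
          geom_sum_xS]
    exact hle hp
  have hf : Ideal.Quotient.liftₐ (catalanIdeal n d) (aeval (xS n d ^ u * yS n d ^ v)) hker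
      (tR n d) = xS n d ^ u * yS n d ^ v :=
    (Ideal.Quotient.lift_mk _ _ _).trans (aeval_X _)
  exact ⟨Ideal.Quotient.liftₐ (catalanIdeal n d) (aeval (xS n d ^ u * yS n d ^ v)) hker,
    by rw [map_pow, hf, hTd], by rw [map_pow, hf, hTn]⟩

end CatalanQuotient

open CatalanQuotient in
/-- For coprime `n, d ≥ 2`, the images in
`R = ℤ[T]/(1 + T^n + ⋯ + T^{(d-1)n}, 1 + T^d + ⋯ + T^{(n-1)d})` of the monomials
`T^{da + nb}` for `0 ≤ a ≤ n-2`, `0 ≤ b ≤ d-2` form a `ℤ`-module basis of `R`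
(so `R` is free of rank `(n-1)(d-1)`). -/
theorem catalan_quotient_monomial_basis (n d : ℕ) (hn : 2 ≤ n) (hd : 2 ≤ d)
    (hnd : Nat.Coprime n d) :
    LinearIndependent ℤ (fun ab : Fin (n - 1) × Fin (d - 1) =>
      Ideal.Quotient.mk (catalanIdeal n d)
        (Polynomial.X ^ (d * (ab.1 : ℕ) + n * (ab.2 : ℕ)))) ∧
    Submodule.span ℤ (Set.range fun ab : Fin (n - 1) × Fin (d - 1) =>
      Ideal.Quotient.mk (catalanIdeal n d)
        (Polynomial.X ^ (d * (ab.1 : ℕ) + n * (ab.2 : ℕ)))) = ⊤ := by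
  obtain ⟨b, hb⟩ := exists_basis_S n d hn hd
  have hfam : (fun ab : Fin (n - 1) × Fin (d - 1) => Ideal.Quotient.mk (catalanIdeal n d)
      (Polynomial.X ^ (d * (ab.1 : ℕ) + n * (ab.2 : ℕ)))) =
      fun ab => (tR n d ^ d) ^ (ab.1 : ℕ) * (tR n d ^ n) ^ (ab.2 : ℕ) := by
    funext ab
    rw [map_pow, ← pow_mul, ← pow_mul, ← pow_add, tR]
  rw [hfam]
  constructor
  · obtain ⟨f, hfx, hfy⟩ := exists_ofQuotient hn hd hnd
    refine LinearIndependent.of_comp f.toLinearMap ?_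
    suffices h : ⇑f.toLinearMap ∘ (fun ab : Fin (n - 1) × Fin (d - 1) =>
        (tR n d ^ d) ^ (ab.1 : ℕ) * (tR n d ^ n) ^ (ab.2 : ℕ)) = b by
      rw [h]
      exact b.linearIndependent
    funext ab
    simp only [Function.comp_apply, AlgHom.toLinearMap_apply]
    rw [map_mul, map_pow f (_ ^ d), map_pow f (_ ^ n), hfx, hfy, hb]
  · have hrange : (Set.range fun ab : Fin (n - 1) × Fin (d - 1) =>
        (tR n d ^ d) ^ (ab.1 : ℕ) * (tR n d ^ n) ^ (ab.2 : ℕ)) =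
        (toQuotient n d).toLinearMap '' Set.range b := by
      rw [← Set.range_comp]
      congr 1
      funext ab
      simp only [Function.comp_apply, AlgHom.toLinearMap_apply]
      rw [hb, map_mul, map_pow, map_pow, toQuotient_xS, toQuotient_yS]
    rw [hrange, Submodule.span_image]
    refine (congrArg (Submodule.map (toQuotient n d).toLinearMap) b.span_eq).trans ?_
    exact (Submodule.map_top _).trans
      (LinearMap.range_eq_top.mpr (toQuotient_surjective hn hd hnd))
end

section
/- Let $p$ be a prime, let $\zeta_p$ be a primitive $p$-th root of unity, and let $O := \mathbb{Z}[\zeta_p]$. Let $S$ be an associative unital $O$-algebra, let $\gamma \in S$, let $i \ge 1$ be an integer, and suppose that $\gamma - 1 \in (1-\zeta_p)^i S$ (i.e. $\gamma - 1 = (1-\zeta_p)^i \cdot s$ for some $s \in S$, where $(1-\zeta_p)^i$ acts through the algebra structure). Then: (1) for every integer $k \ge 0$, $(\gamma - 1)^k \in (1-\zeta_p)^{ik} S$; (2) $1 + \gamma + \gamma^2 + \cdots + \gamma^{p-1} \in (1-\zeta_p)^{p-1} S$; (3) $\gamma^p - 1 \in (1-\zeta_p)^{p-1+i} S$. -/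
/-!
Put `π = 1 - ζ`. Since `π` divides `1 - μ` for each primitive `p`-th root of unity `μ` (a power
of `ζ`), evaluating `Φ_p = ∏ (X - μ)` at `1` gives `π ^ (p - 1) ∣ p`
(`one_sub_zetaElem_pow_dvd_prime`). In `ℤ[X]` one has
`1 + X + ⋯ + X ^ (p - 1) = (X - 1) ^ (p - 1) + p * g` (`exists_geom_sum_eq`).
Evaluating at `γ`, both terms on the right lie in `π ^ (p - 1) S`: the first because
`π ^ i ∣ γ - 1` with `i ≥ 1`, the second by the divisibility of `p`. Finally
`γ ^ p - 1 = (γ - 1) * (1 + γ + ⋯ + γ ^ (p - 1))`. Everything is phrased with `∣`, which for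
noncommutative `S` means right multiples; the image of `ζ` being central makes the exponents
add up.
-/

/-- The ring `ℤ[ζ]` generated by `ζ` inside `ℂ`. -/
def zetaRing (ζ : ℂ) : Subalgebra ℤ ℂ := Algebra.adjoin ℤ ({ζ} : Set ℂ)

/-- `ζ` as an element of `ℤ[ζ]`. -/
def zetaElem (ζ : ℂ) : zetaRing ζ := ⟨ζ, Algebra.subset_adjoin rfl⟩

open Polynomial in
/-- Modulo `p`, the polynomial `1 + X + ⋯ + X ^ (p - 1)` is `(X - 1) ^ (p - 1)`. -/
theorem exists_geom_sum_eq (p : ℕ) (hp : p.Prime) :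
    ∃ g : ℤ[X], ∑ j ∈ Finset.range p, (X : ℤ[X]) ^ j = (X - 1) ^ (p - 1) + C (p : ℤ) * g := by
  have : Fact p.Prime := ⟨hp⟩
  have hmod : cyclotomic p (ZMod p) = (X - 1) ^ (p - 1) := by
    have := cyclotomic_mul_prime_eq_pow_of_not_dvd (ZMod p) (p := p) (n := 1)
      (by simpa using hp.one_lt.ne')
    simpa using this
  have hdvd : C (p : ℤ) ∣ cyclotomic p ℤ - (X - 1) ^ (p - 1) := by
    rw [C_dvd_iff_dvd_coeff]
    intro n
    rw [← ZMod.intCast_zmod_eq_zero_iff_dvd, ← eq_intCast (Int.castRingHom (ZMod p)),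
      ← coeff_map]
    simp [hmod]
  obtain ⟨g, hg⟩ := hdvd
  exact ⟨g, by rw [← hg, cyclotomic_prime]; ring⟩

theorem one_sub_zetaElem_pow_dvd_prime (p : ℕ) (hp : p.Prime) (ζ : ℂ) (hζ : IsPrimitiveRoot ζ p) :
    (1 - zetaElem ζ) ^ (p - 1) ∣ (p : zetaRing ζ) := by
  have : Fact p.Prime := ⟨hp⟩
  have hz : IsPrimitiveRoot (zetaElem ζ) p :=
    IsPrimitiveRoot.of_map_of_injective (f := (zetaRing ζ).val) hζ Subtype.val_injective
  rw [← Polynomial.eval_one_cyclotomic_prime (R := zetaRing ζ) (p := p),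
    Polynomial.cyclotomic_eq_prod_X_sub_primitiveRoots hz, Polynomial.eval_prod,
    ← Nat.totient_prime hp, ← hz.card_primitiveRoots, ← Finset.prod_const]
  refine Finset.prod_dvd_prod_of_dvd _ _ fun μ hμ => ?_
  obtain ⟨k, -, rfl⟩ :=
    hz.eq_pow_of_pow_eq_one ((mem_primitiveRoots hp.pos).1 hμ).pow_eq_one
  simpa using one_sub_dvd_one_sub_pow (zetaElem ζ) k

/-- Let `p` be prime, `ζ_p` a primitive `p`-th root of unity,
`O = ℤ[ζ_p]`, and `S` an associative unital `O`-algebra. If `γ ∈ S` satisfies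
`γ - 1 ∈ (1 - ζ_p)^i S` for some `i ≥ 1`, then:
(1) `(γ - 1)^k ∈ (1 - ζ_p)^{ik} S` for all `k ≥ 0`;
(2) `1 + γ + ⋯ + γ^{p-1} ∈ (1 - ζ_p)^{p-1} S`;
(3) `γ^p - 1 ∈ (1 - ζ_p)^{p-1+i} S`. -/
theorem killer_elements (p : ℕ) (hp : p.Prime) (ζ : ℂ) (hζ : IsPrimitiveRoot ζ p)
    (S : Type*) [Ring S] [Algebra (zetaRing ζ) S]
    (γ : S) (i : ℕ) (hi : 1 ≤ i)
    (h : ∃ s : S, γ - 1 = algebraMap (zetaRing ζ) S ((1 - zetaElem ζ) ^ i) * s) :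
    (∀ k : ℕ, ∃ s : S,
        (γ - 1) ^ k = algebraMap (zetaRing ζ) S ((1 - zetaElem ζ) ^ (i * k)) * s) ∧
    (∃ s : S, (∑ j ∈ Finset.range p, γ ^ j) =
        algebraMap (zetaRing ζ) S ((1 - zetaElem ζ) ^ (p - 1)) * s) ∧
    (∃ s : S, γ ^ p - 1 =
        algebraMap (zetaRing ζ) S ((1 - zetaElem ζ) ^ (p - 1 + i)) * s) := by
  let c : S := algebraMap (zetaRing ζ) S (1 - zetaElem ζ)
  have hc (x : S) : Commute c x := Algebra.commutes _ x
  simp only [map_pow] at h ⊢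
  change c ^ i ∣ γ - 1 at h
  change (∀ k : ℕ, c ^ (i * k) ∣ (γ - 1) ^ k) ∧
    c ^ (p - 1) ∣ ∑ j ∈ Finset.range p, γ ^ j ∧ c ^ (p - 1 + i) ∣ γ ^ p - 1
  have h1 (k : ℕ) : c ^ (i * k) ∣ (γ - 1) ^ k := by
    obtain ⟨s, hs⟩ := h
    exact ⟨s ^ k, by rw [hs, ((hc s).pow_left i).mul_pow, pow_mul]⟩
  have h2 : c ^ (p - 1) ∣ ∑ j ∈ Finset.range p, γ ^ j := by
    obtain ⟨g, hg⟩ := exists_geom_sum_eq p hp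
    have hγ := congrArg (Polynomial.aeval γ) hg
    simp only [map_sum, map_pow, map_add, map_mul, map_sub, map_one, Polynomial.aeval_X,
      map_natCast] at hγ
    rw [hγ]
    have hpS : c ^ (p - 1) ∣ (p : S) := by
      simpa [c] using map_dvd (algebraMap (zetaRing ζ) S)
        (one_sub_zetaElem_pow_dvd_prime p hp ζ hζ)
    exact dvd_add ((pow_dvd_pow c (Nat.le_mul_of_pos_left _ hi)).trans (h1 (p - 1)))
      (hpS.mul_right _)
  refine ⟨h1, h2, ?_⟩
  obtain ⟨s, hs⟩ := h
  obtain ⟨t, ht⟩ := h2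
  refine ⟨t * s, ?_⟩
  rw [← geom_sum_mul, ht, hs, pow_add, mul_assoc, mul_assoc, ← mul_assoc t,
    ← ((hc t).pow_left i).eq, mul_assoc]
end

section
/- Let $p$ and $q$ be distinct odd primes, and let $E = \mathbb{Q}(\zeta_p, \zeta_q)$ be the $pq$-th cyclotomic field. Then $1 - \zeta_q$ is not a $p$-th power in $E$; that is, there is no $w \in E$ with $w^p = 1 - \zeta_q$. -/
/-!
The proof compares norms down to `ℚ`. Suppose `w ∈ E` and `w ^ p = 1 - ζ_q`. As `p` is odd,
`(-w) ^ p = ζ_q - 1`. The norm of `ζ_q - 1` from `ℚ(ζ_q)` to `ℚ` is `q`, and `[E : ℚ(ζ_q)] = p - 1`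
because `E` is the `pq`-th cyclotomic field (`isCyclotomicExtension_cycField`), so taking norms
from `E` to `ℚ` gives `N(-w) ^ p = q ^ (p - 1)` with `N(-w) ∈ ℚ`. Comparing `q`-adic valuations,
`p ∣ p - 1`, which is absurd.
-/

open Complex in
/-- `ζ_m = e^{2πi/m}`. -/
noncomputable def primRoot (m : ℕ) : ℂ := Complex.exp (2 * (Real.pi : ℂ) * Complex.I / (m : ℂ))

/-- The `pq`-th cyclotomic field `E = ℚ(ζ_p, ζ_q)` as a subfield of `ℂ`. -/
noncomputable def cycField (p q : ℕ) : IntermediateField ℚ ℂ :=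
  IntermediateField.adjoin ℚ ({primRoot p, primRoot q} : Set ℂ)

theorem primRoot_isPrimitiveRoot {m : ℕ} (hm : m ≠ 0) : IsPrimitiveRoot (primRoot m) m :=
  Complex.isPrimitiveRoot_exp m hm

theorem isCyclotomicExtension_cycField {p q : ℕ} (hp : p ≠ 0) (hq : q ≠ 0)
    (hpq : Nat.Coprime p q) : IsCyclotomicExtension {p * q} ℚ (cycField p q) := by
  have : NeZero (p * q) := ⟨mul_ne_zero hp hq⟩
  have h₁ := primRoot_isPrimitiveRoot hp
  have h₂ := primRoot_isPrimitiveRoot hq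
  have h := primRoot_isPrimitiveRoot (mul_ne_zero hp hq)
  refine (IntermediateField.isCyclotomicExtension_singleton_iff_eq_adjoin (p * q) ℚ ℂ _ h).mpr ?_
  apply le_antisymm
  · refine IntermediateField.adjoin_le_iff.mpr ?_
    -- `ζ_p` and `ζ_q` are `pq`-th roots of unity, hence powers of `ζ_{pq}`.
    have key : ∀ x : ℂ, x ^ (p * q) = 1 →
        x ∈ IntermediateField.adjoin ℚ ({primRoot (p * q)} : Set ℂ) := by
      intro x hx
      obtain ⟨i, -, rfl⟩ := h.eq_pow_of_pow_eq_one hx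
      exact pow_mem (IntermediateField.mem_adjoin_simple_self ℚ _) i
    rintro x (rfl | rfl)
    · exact key _ (by rw [pow_mul, h₁.pow_eq_one, one_pow])
    · exact key _ (by rw [mul_comm, pow_mul, h₂.pow_eq_one, one_pow])
  · refine IntermediateField.adjoin_le_iff.mpr (Set.singleton_subset_iff.mpr ?_)
    -- By coprimality `ζ_p * ζ_q` has order `pq`, so `ζ_{pq}` is a power of it.
    have hmul : IsPrimitiveRoot (primRoot p * primRoot q) (p * q) := by
      have h' := IsPrimitiveRoot.orderOf (primRoot p * primRoot q)
      rwa [(Commute.all _ _).orderOf_mul_eq_mul_orderOf_of_coprime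
        (by rwa [← h₁.eq_orderOf, ← h₂.eq_orderOf]), ← h₁.eq_orderOf, ← h₂.eq_orderOf] at h'
    obtain ⟨i, -, hi⟩ := hmul.eq_pow_of_pow_eq_one h.pow_eq_one
    rw [SetLike.mem_coe, ← hi]
    exact pow_mem (mul_mem (IntermediateField.subset_adjoin ℚ _ (by simp))
      (IntermediateField.subset_adjoin ℚ _ (by simp))) i

/-- The norm of `ζ - 1` from the `pq`-th cyclotomic field down to `ℚ`, for `ζ` a primitive `q`-th
root of unity: it is `q` on the subfield `ℚ(ζ)`, over which the whole field has degree `p - 1`. -/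
theorem norm_zeta_sub_one {E : Type*} [Field E] [CharZero E] {p q : ℕ} (hp : p.Prime)
    (hq : q.Prime) (hq2 : q ≠ 2) (hpq : p ≠ q) [IsCyclotomicExtension {p * q} ℚ E] {ζ : E}
    (hζ : IsPrimitiveRoot ζ q) : Algebra.norm ℚ (ζ - 1) = (q : ℚ) ^ (p - 1) := by
  have : Fact q.Prime := ⟨hq⟩
  have : NeZero q := ⟨hq.ne_zero⟩
  have : NeZero (p * q) := ⟨mul_ne_zero hp.ne_zero hq.ne_zero⟩
  have : FiniteDimensional ℚ E := IsCyclotomicExtension.finiteDimensional {p * q} ℚ E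
  let F := IntermediateField.adjoin ℚ ({ζ} : Set E)
  have : IsCyclotomicExtension {q} ℚ F := hζ.intermediateField_adjoin_isCyclotomicExtension ℚ
  have hF : Module.finrank ℚ F = q - 1 := by
    rw [IsCyclotomicExtension.finrank (n := q) F
      (Polynomial.cyclotomic.irreducible_rat hq.pos), Nat.totient_prime hq]
  have hE : Module.finrank ℚ E = (p - 1) * (q - 1) := by
    rw [IsCyclotomicExtension.finrank (n := p * q) E
      (Polynomial.cyclotomic.irreducible_rat (NeZero.pos _)),
      Nat.totient_mul ((Nat.coprime_primes hp hq).mpr hpq), Nat.totient_prime hp,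
      Nat.totient_prime hq]
  have hd : Module.finrank F E = p - 1 := by
    have h := Module.finrank_mul_finrank ℚ F E
    rw [hF, hE, mul_comm] at h
    exact Nat.eq_of_mul_eq_mul_right (Nat.sub_pos_of_lt hq.one_lt) h
  let z : F := IntermediateField.AdjoinSimple.gen ℚ ζ
  have hz : IsPrimitiveRoot z q :=
    IsPrimitiveRoot.of_map_of_injective (f := algebraMap F E) hζ (algebraMap F E).injective
  have hnorm : Algebra.norm ℚ (z - 1) = (q : ℚ) :=
    hz.norm_sub_one_of_prime_ne_two' (Polynomial.cyclotomic.irreducible_rat hq.pos) hq2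
  have hmap : ζ - 1 = algebraMap F E (z - 1) := by
    rw [map_sub, map_one]; rfl
  rw [hmap, ← Algebra.norm_norm (R := ℚ) (S := F), Algebra.norm_algebraMap, map_pow, hnorm, hd]

/-- For distinct odd primes `p` and `q`, `1 - ζ_q` is not a `p`-th
power in `E = ℚ(ζ_p, ζ_q)`. -/
theorem one_sub_zeta_q_not_pth_power (p q : ℕ) (hp : p.Prime) (hq : q.Prime)
    (hpo : Odd p) (hqo : Odd q) (hpq : p ≠ q) :
    ¬ ∃ w : ℂ, w ∈ cycField p q ∧ w ^ p = 1 - primRoot q := by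
  rintro ⟨w, hw, h⟩
  have : Fact q.Prime := ⟨hq⟩
  have := isCyclotomicExtension_cycField hp.ne_zero hq.ne_zero
    ((Nat.coprime_primes hp hq).mpr hpq)
  let ζ : cycField p q := ⟨primRoot q, IntermediateField.subset_adjoin ℚ _ (by simp)⟩
  have hζ : IsPrimitiveRoot ζ q :=
    IsPrimitiveRoot.of_map_of_injective (f := algebraMap (cycField p q) ℂ)
      (primRoot_isPrimitiveRoot hq.ne_zero) (algebraMap (cycField p q) ℂ).injective
  have hwζ : (-⟨w, hw⟩ : cycField p q) ^ p = ζ - 1 := by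
    apply Subtype.ext
    change (-w) ^ p = primRoot q - 1
    rw [hpo.neg_pow, h, neg_sub]
  have hN := congrArg (Algebra.norm ℚ) hwζ
  rw [map_pow, norm_zeta_sub_one hp hq (by rintro rfl; exact absurd hqo (by decide)) hpq hζ] at hN
  set r := Algebra.norm ℚ (-⟨w, hw⟩ : cycField p q)
  have hval := congrArg (padicValRat q) hN
  rw [padicValRat.pow, padicValRat.pow, padicValRat.self hq.one_lt, mul_one] at hval
  have hdvd : (p : ℤ) ∣ ((p - 1 : ℕ) : ℤ) := ⟨_, hval.symm⟩
  exact Nat.not_dvd_of_pos_of_lt (Nat.sub_pos_of_lt hp.one_lt) (Nat.sub_lt hp.pos one_pos)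
    (Int.natCast_dvd_natCast.mp hdvd)
end

section
/- Let $n, d \ge 2$ be coprime integers, let $c \in \mathbb{C}$, and let $v \in \mathbb{C}[x]$ be a polynomial with $n \cdot \deg(v) < d$ satisfying $v(x)^n = x^d + x - (x - c)^d$ as polynomials in $\mathbb{C}[x]$. Then $d = 2$, or $(n, d) = (2, 3)$. -/
/-!
The reflection `x ↦ c - x` sends `x ^ d - (x - c) ^ d` to `(-1) ^ (d + 1)` times itself. Hence, with
`w (x) = v (c - x)`, the hypothesis gives `v ^ n - w ^ n = 2 x - c` if `d` is odd, and
`v ^ n + w ^ n = c` if `d` is even; in the second case `n` is odd, so the left side is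
`v ^ n - (-w) ^ n`. Both right-hand sides are nonzero of degree at most `1` once `c ≠ 0`.

Over `ℂ` a difference `p ^ n - q ^ n` splits into the `n` factors `p - ζ q` with `ζ ^ n = 1`. If the
product is nonzero of degree at most `1`, then at most one factor is nonconstant, and any two factors
determine `p`; this forces `n * deg p ≤ 2` (`mul_natDegree_le_two_of_pow_sub_pow`). On the other
hand, for `d ≥ 3` the coefficient of `x ^ (d - 1)` in `v ^ n` is `d c ≠ 0`, so `d - 1 ≤ n * deg v`.
Therefore `d = 3`, and `n ∣ 2`.
-/

open Polynomial in
/-- Two distinct factors `p - a q`, `p - b q` of degree at most `k`, with `a` and `b` constant,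
bound the degree of `p`. -/
lemma natDegree_le_of_sub_mul {p q a b : ℂ[X]} {k : ℕ} (ha : a.natDegree = 0)
    (hb : b.natDegree = 0) (hab : a ≠ b) (h1 : (p - a * q).natDegree ≤ k)
    (h2 : (p - b * q).natDegree ≤ k) : p.natDegree ≤ k := by
  obtain ⟨s, rfl⟩ := natDegree_eq_zero.mp ha
  obtain ⟨t, rfl⟩ := natDegree_eq_zero.mp hb
  have hst : t - s ≠ 0 := fun h => hab (by rw [sub_eq_zero.mp h])
  have key : C (t - s) * p = C t * (p - C s * q) - C s * (p - C t * q) := by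
    rw [C_sub]; ring
  rw [← natDegree_C_mul hst, key]
  exact (natDegree_sub_le _ _).trans
    (max_le ((natDegree_C_mul_le _ _).trans h1) ((natDegree_C_mul_le _ _).trans h2))

open Polynomial in
lemma mul_natDegree_le_two_of_pow_sub_pow {n : ℕ} (hn : 2 ≤ n) {p q D : ℂ[X]} (hD : D ≠ 0)
    (hD1 : D.natDegree ≤ 1) (h : p ^ n - q ^ n = D) : n * p.natDegree ≤ 2 := by
  classical
  have hprim : IsPrimitiveRoot (C (Complex.exp (2 * Real.pi * Complex.I / n)) : ℂ[X]) n :=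
    (Complex.isPrimitiveRoot_exp n (by omega)).map_of_injective C_injective
  set S := nthRootsFinset n (1 : ℂ[X]) with hS
  have hcard : S.card = n := hprim.card_nthRootsFinset
  have hconst : ∀ z ∈ S, z.natDegree = 0 := by
    intro z hz
    have hz1 := (mem_nthRootsFinset (by omega) (1 : ℂ[X])).mp hz
    have := congrArg natDegree hz1
    rw [natDegree_pow, natDegree_one] at this
    exact (Nat.mul_eq_zero.mp this).resolve_left (by omega)
  have hprod : ∏ z ∈ S, (p - z * q) = D := by
    rw [← h, hprim.pow_sub_pow_eq_prod_sub_mul p q (by omega)]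
  have hsum : ∑ z ∈ S, (p - z * q).natDegree ≤ 1 := by
    rw [← natDegree_prod _ _ fun z hz h0 => hD (hprod ▸ Finset.prod_eq_zero hz h0), hprod]
    exact hD1
  rcases hn.eq_or_lt with rfl | hn3
  · obtain ⟨a, ha, b, hb, hab⟩ := Finset.one_lt_card.mp (show 1 < S.card by omega)
    have hle : ∀ z ∈ S, (p - z * q).natDegree ≤ 1 := fun z hz =>
      (Finset.single_le_sum (f := fun z => (p - z * q).natDegree)
        (fun _ _ => Nat.zero_le _) hz).trans hsum
    have := natDegree_le_of_sub_mul (hconst a ha) (hconst b hb) hab (hle a ha) (hle b hb)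
    omega
  · have hbad : (S.filter fun z => ¬ (p - z * q).natDegree = 0).card ≤ 1 := by
      rw [Finset.card_filter]
      refine (Finset.sum_le_sum fun z _ => ?_).trans hsum
      split_ifs <;> omega
    have hsplit := Finset.card_filter_add_card_filter_not (s := S)
      (fun z => (p - z * q).natDegree = 0)
    obtain ⟨a, ha, b, hb, hab⟩ := Finset.one_lt_card.mp
      (show 1 < (S.filter fun z => (p - z * q).natDegree = 0).card by omega)
    rw [Finset.mem_filter] at ha hb
    have := natDegree_le_of_sub_mul (hconst a ha.1) (hconst b hb.1) hab ha.2.le hb.2.le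
    simp [Nat.le_zero.mp this]

open Polynomial in
/-- If `n, d ≥ 2` are coprime, `c ∈ ℂ`, and `v ∈ ℂ[x]` satisfies
`n · deg v < d` and `v(x)^n = x^d + x - (x - c)^d`, then `d = 2` or `(n, d) = (2, 3)`. -/
theorem torsion_poly_identity_xd_plus_x (n d : ℕ) (hn : 2 ≤ n) (hd : 2 ≤ d)
    (hnd : Nat.Coprime n d) (c : ℂ) (v : Polynomial ℂ)
    (hdeg : n * v.natDegree < d)
    (hv : v ^ n = X ^ d + X - (X - C c) ^ d) :
    d = 2 ∨ (n = 2 ∧ d = 3) := by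
  rcases hd.eq_or_lt with rfl | hd3
  · exact Or.inl rfl
  have hc : c ≠ 0 := by
    rintro rfl
    have h := congrArg natDegree hv
    simp only [map_zero, sub_zero, add_sub_cancel_left, natDegree_pow, natDegree_X] at h
    have := Nat.eq_one_of_mul_eq_one_right h
    omega
  have hlow : d - 1 ≤ n * v.natDegree := by
    rw [← natDegree_pow]
    apply le_natDegree_of_ne_zero
    have h1 : d - (d - 1) = 1 := by omega
    have h2 : d.choose (d - 1) = d := by
      rw [Nat.choose_symm (by omega : 1 ≤ d), Nat.choose_one_right]
    rw [hv, coeff_sub, coeff_add, coeff_X_pow, coeff_X, sub_eq_add_neg X, ← C_neg, coeff_X_add_C_pow, h1, h2,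
      if_neg (by omega), if_neg (by omega)]
    simp [hc]
    omega
  have hw : (v.comp (C c - X)) ^ n = (C c - X) ^ d + (C c - X) - (-X) ^ d := by
    rw [← pow_comp, hv]
    simp
  have hneg : (C c - X : ℂ[X]) = -(X - C c) := by ring
  have hup : n * v.natDegree ≤ 2 := by
    rcases Nat.even_or_odd d with hde | hdo
    · have hno : Odd n := by
        by_contra hne
        have := Nat.dvd_gcd (Nat.not_odd_iff_even.mp hne).two_dvd hde.two_dvd
        rw [hnd.gcd_eq_one] at this
        omega
      refine mul_natDegree_le_two_of_pow_sub_pow (q := -v.comp (C c - X)) (D := C c) hn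
        (C_ne_zero.mpr hc) (by simp) ?_
      rw [hno.neg_pow, hw, hv, hneg, hde.neg_pow, hde.neg_pow]
      ring
    · refine mul_natDegree_le_two_of_pow_sub_pow (q := v.comp (C c - X)) (D := C 2 * X + C (-c)) hn
        ?_ natDegree_linear_le ?_
      · intro h
        simpa using congrArg (fun f => coeff f 1) h
      · rw [hw, hv, hneg, hdo.neg_pow, hdo.neg_pow, C_neg, show (C 2 : ℂ[X]) = 2 from rfl]
        ring
  have h2 : n * v.natDegree = 2 := by omega
  have := Nat.le_of_dvd two_pos (Dvd.intro _ h2)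
  exact Or.inr ⟨by omega, by omega⟩
end

section
/- Let $p$ and $q$ be distinct odd primes, let $c \in \mathbb{C}$, and let $v \in \mathbb{C}[x]$ be a polynomial with $p \cdot \deg(v) < q$ satisfying $v(x)^p = x^q + 1 - (x - c)^q$ as polynomials in $\mathbb{C}[x]$. Then $c = 0$, the polynomial $x^q + 1 - (x-c)^q$ is the constant polynomial $1$, and $v$ is a constant with $v^p = 1$. -/
/-! Put `L = X ^ q + 1 - (X - c) ^ q`. The binomial powers `X ^ q` and `(X - c) ^ q` both solve the
Euler-type equation `q(q-1)f - (q-1)(2X - c)f' + X(X - c)f'' = 0`, whose value at `f = 1` is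
`q(q-1)`; so the same combination of `L, L', L''` is the nonzero constant `q(q-1)`. If `L = v ^ p`
then `v ^ (p-2)` divides `L`, `L'` and `L''`, hence divides a unit; as `p ≥ 3`, `v` is constant.
Thus `L' = 0`, and evaluating it at `c` gives `q c ^ (q-1) = 0`, so `c = 0`. -/

open Polynomial in
/-- The differential identity for `L`, with denominators cleared and `q = n + 2`. -/
lemma diff_identity (n : ℕ) (c : ℂ) (L : ℂ[X])
    (hL : L = X ^ (n + 2) + 1 - (X - C c) ^ (n + 2)) :
    ((n : ℂ[X]) + 2) * ((n : ℂ[X]) + 1) * L - ((n : ℂ[X]) + 1) * (2 * X - C c) * derivative L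
      + X * (X - C c) * derivative (derivative L) = ((n : ℂ[X]) + 2) * ((n : ℂ[X]) + 1) := by
  have hC : (C 2 : ℂ[X]) = 2 := map_ofNat C 2
  have h1 : derivative L = ((n : ℂ[X]) + 2) * (X ^ (n + 1) - (X - C c) ^ (n + 1)) := by
    rw [hL]
    simp [derivative_pow, hC]
    ring
  have h2 : derivative (derivative L)
      = ((n : ℂ[X]) + 2) * ((n : ℂ[X]) + 1) * (X ^ n - (X - C c) ^ n) := by
    have e : (n : ℂ[X]) + 2 = C ((n : ℂ) + 2) := by simp [hC]
    rw [h1, e, derivative_C_mul]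
    simp [derivative_pow, hC]
    ring
  rw [h2, h1, hL]
  ring

open Polynomial in
lemma pow_dvd_derivatives (k : ℕ) (v : ℂ[X]) :
    v ^ k ∣ derivative (v ^ (k + 2)) ∧ v ^ k ∣ derivative (derivative (v ^ (k + 2))) := by
  have h (m : ℕ) (f : ℂ[X]) (hf : v ^ (m + 1) ∣ f) : v ^ m ∣ derivative f := by
    obtain ⟨g, rfl⟩ := hf
    rw [derivative_mul, derivative_pow_succ]
    exact dvd_add (Dvd.intro_left _ (by ring :
      C ((m : ℂ) + 1) * derivative v * g * v ^ m = _)) (Dvd.intro _ (by ring :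
      v ^ m * (v * derivative g) = _))
  have h1 := h (k + 1) _ (dvd_refl (v ^ (k + 2)))
  exact ⟨(pow_dvd_pow v k.le_succ).trans h1, h k _ h1⟩

open Polynomial in
/-- If `p, q` are distinct odd primes, `c ∈ ℂ`, and `v ∈ ℂ[x]`
satisfies `p · deg v < q` and `v(x)^p = x^q + 1 - (x - c)^q`, then `c = 0`, the
polynomial `x^q + 1 - (x - c)^q` is the constant polynomial `1`, and `v` is a
constant with `v^p = 1`. -/
theorem torsion_poly_identity_xq_plus_one (p q : ℕ) (hp : p.Prime) (hq : q.Prime)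
    (hpo : Odd p) (hqo : Odd q) (hpq : p ≠ q) (c : ℂ) (v : Polynomial ℂ)
    (hdeg : p * v.natDegree < q)
    (hv : v ^ p = X ^ q + 1 - (X - C c) ^ q) :
    c = 0 ∧ (X : Polynomial ℂ) ^ q + 1 - (X - C c) ^ q = 1 ∧
      ∃ a : ℂ, v = C a ∧ a ^ p = 1 := by
  have hp3 : 3 ≤ p := by
    have := hp.two_le
    obtain ⟨m, rfl⟩ := hpo
    omega
  obtain ⟨k, rfl⟩ : ∃ k, p = k + 2 := ⟨p - 2, by omega⟩
  obtain ⟨n, rfl⟩ : ∃ n, q = n + 2 := ⟨q - 2, by have := hq.two_le; omega⟩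
  have hC : (C 2 : ℂ[X]) = 2 := map_ofNat C 2
  have hid := diff_identity n c _ hv
  obtain ⟨d1, d2⟩ := pow_dvd_derivatives k v
  have hdvd : v ^ k ∣ ((n : ℂ[X]) + 2) * ((n : ℂ[X]) + 1) := by
    rw [← hid]
    exact dvd_add (dvd_sub ((pow_dvd_pow v (by omega)).mul_left _) (d1.mul_left _))
      (d2.mul_left _)
  have hunit : IsUnit (((n : ℂ[X]) + 2) * (n + 1)) := by
    have e : ((n : ℂ[X]) + 2) * (n + 1) = C (((n + 2) * (n + 1) : ℕ) : ℂ) := by simp [hC]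
    rw [e, isUnit_C]
    exact (Nat.cast_ne_zero.mpr (by positivity)).isUnit
  have hvu : IsUnit v := (isUnit_pow_iff (by omega)).mp (isUnit_of_dvd_unit hdvd hunit)
  obtain ⟨a, -, rfl⟩ := Polynomial.isUnit_iff.mp hvu
  have hc : c = 0 := by
    have h := congrArg (fun f => (derivative f).eval c) hv
    rw [← C_pow] at h
    simp [derivative_pow] at h
    rcases h with h | h
    · exact absurd h (by exact_mod_cast (by omega : n + 2 ≠ 0))
    · exact h
  subst hc
  have h1 : (X : ℂ[X]) ^ (n + 2) + 1 - (X - C 0) ^ (n + 2) = 1 := by simp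
  refine ⟨rfl, h1, a, rfl, ?_⟩
  rw [h1, ← C_pow] at hv
  exact C_injective (by simpa using hv)
end

section
/- Let $p$ and $q$ be distinct odd primes and set $g := (p-1)(q-1)/2$. Let $M \subseteq \mathbb{N}$ be a subset containing $0$ and closed under addition, with $p - 1 \in M$ and $p \in M$, and suppose the complement $G := \mathbb{N} \setminus M$ is finite with exactly $g$ elements. Then $\sum_{k \in G} k \;\ge\; \frac{g(g+1)}{2} + 2$ if $q = 3$, and $\sum_{k \in G} k \;\ge\; \frac{g(g+1)}{2} + \frac{g(q-3)}{2}$ if $q \ge 5$. -/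
/-!
Put `n = p - 1` and `q = 2m + 1`, so that `g = nm`. The weight of `G` is the sum over the gaps `k`
of the number of positive nongaps below `k`. For every `i ≥ 1` both `i n` and `i n + 1 = (i-1) n + p`
are nongaps, so a gap `k` has at least `2⌊k/n⌋` positive nongaps below it
(`le_card_nongaps`, `card_add_le_of_gap`). Hence the weight is at least `2 ∑ ⌊k/n⌋`. As the `g = nm`
gaps are distinct and positive, the `i`-th one is at least `i`, so this sum is at least
`∑_{i=1}^{nm} ⌊i/n⌋ = n m (m-1)/2 + m` (`sum_div`), and the weight is at least
`n m (m-1) + 2m = g (q-3)/2 + 2m`, which settles both cases.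
-/

/-- The numbers of smaller elements, taken over all elements of a finite set `s`, run through
`0, 1, …, #s - 1`; sums over ranks therefore become sums over an initial segment. -/
lemma sum_rank (F : ℕ → ℕ) (s : Finset ℕ) :
    ∑ k ∈ s, F (s.filter (· < k)).card = ∑ i ∈ Finset.range s.card, F i := by
  induction s using Finset.induction_on_max with
  | empty => simp
  | insert a s ha ih =>
    have hna : a ∉ s := fun h => lt_irrefl a (ha a h)
    rw [Finset.sum_insert hna, Finset.card_insert_of_notMem hna, Finset.sum_range_succ, ← ih,
      add_comm]
    congr 1
    · refine Finset.sum_congr rfl fun k hk => ?_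
      rw [Finset.filter_insert, if_neg (ha k hk).not_gt]
    · rw [Finset.filter_insert, if_neg (lt_irrefl a), Finset.filter_true_of_mem ha]

lemma sum_div (n m : ℕ) (hn : 0 < n) :
    2 * ∑ i ∈ Finset.range (n * m), (i + 1) / n = n * (m * (m - 1)) + 2 * m := by
  obtain ⟨t, rfl⟩ : ∃ t, n = t + 1 := ⟨n - 1, by omega⟩
  induction m with
  | zero => simp
  | succ m ih =>
    have hlow : ∀ i ∈ Finset.range t, ((t + 1) * m + i + 1) / (t + 1) = m := by
      intro i hi
      rw [Finset.mem_range] at hi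
      rw [add_assoc, Nat.mul_add_div hn, Nat.div_eq_of_lt (by omega), add_zero]
    have hlast : ((t + 1) * m + t + 1) / (t + 1) = m + 1 := by
      rw [add_assoc, Nat.mul_add_div hn, Nat.div_self hn]
    rw [mul_add_one (t + 1) m, Finset.sum_range_add, Finset.sum_range_succ,
      Finset.sum_congr rfl hlow, hlast, mul_add, ih, Finset.sum_const, Finset.card_range,
      smul_eq_mul]
    rcases m with _ | m
    · simp
    · simp only [Nat.add_sub_cancel]
      ring

/-- The nongaps counted are `0` and the pairs `i n`, `i n + 1` for `1 ≤ i ≤ d`. -/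
lemma le_card_nongaps (n : ℕ) (hn : 2 ≤ n) (M : Set ℕ) (h0 : 0 ∈ M)
    (hadd : ∀ a ∈ M, ∀ b ∈ M, a + b ∈ M) (hnM : n ∈ M) (hn1 : n + 1 ∈ M)
    (G : Finset ℕ) (hG : ∀ k : ℕ, k ∈ G ↔ k ∉ M) (d : ℕ) :
    d * n ∈ M ∧ 1 + 2 * d ≤ ((Finset.range (d * n + 2)).filter (· ∉ G)).card := by
  have hG' : ∀ k, k ∈ M → k ∉ G := fun k hk h => (hG k).1 h hk
  induction d with
  | zero =>
    refine ⟨by simpa using h0, Finset.card_pos.2 ⟨0, ?_⟩⟩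
    simpa using hG' 0 h0
  | succ d ih =>
    obtain ⟨hd, hc⟩ := ih
    have e : (d + 1) * n = d * n + n := by ring
    have h1 : (d + 1) * n ∈ M := e ▸ hadd _ hd _ hnM
    have h2 : (d + 1) * n + 1 ∈ M := by
      rw [e, add_assoc]; exact hadd _ hd _ hn1
    refine ⟨h1, ?_⟩
    have hmono : ((Finset.range (d * n + 2)).filter (· ∉ G)).card
        ≤ ((Finset.range ((d + 1) * n)).filter (· ∉ G)).card :=
      Finset.card_le_card (Finset.filter_subset_filter _ (Finset.range_mono (by omega)))
    rw [Finset.range_add_one, Finset.filter_insert, if_pos (hG' _ h2),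
      Finset.card_insert_of_notMem (by simp),
      Finset.range_add_one, Finset.filter_insert, if_pos (hG' _ h1),
      Finset.card_insert_of_notMem (by simp)]
    omega

/-- A gap `k` exceeds its rank among the gaps, `#{x ∈ G | x < k} + 1`, by at least `2⌊k/n⌋`. -/
lemma card_add_le_of_gap (n : ℕ) (hn : 2 ≤ n) (M : Set ℕ) (h0 : 0 ∈ M)
    (hadd : ∀ a ∈ M, ∀ b ∈ M, a + b ∈ M) (hnM : n ∈ M) (hn1 : n + 1 ∈ M)
    (G : Finset ℕ) (hG : ∀ k : ℕ, k ∈ G ↔ k ∉ M) (k : ℕ) (hk : k ∈ G) :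
    (G.filter (· < k)).card + 1 + 2 * (k / n) ≤ k := by
  have hkM := (hG k).1 hk
  obtain ⟨hd, hc⟩ := le_card_nongaps n hn M h0 hadd hnM hn1 G hG (k / n)
  have hdiv : k / n * n ≤ k := Nat.div_mul_le_self k n
  have hne0 : k ≠ k / n * n := fun h => hkM (h ▸ hd)
  rcases Nat.eq_zero_or_pos (k / n) with hz | hpos
  · -- Here `k = 1` is possible, so the general count, which needs `⌊k/n⌋ n + 2 ≤ k`, is replaced
    -- by the observation that the smaller gaps lie in `{1, …, k - 1}`.
    rw [hz] at hne0 ⊢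
    have hsub : G.filter (· < k) ⊆ Finset.Ico 1 k := by
      intro x hx
      rw [Finset.mem_filter] at hx
      refine Finset.mem_Ico.2 ⟨Nat.one_le_iff_ne_zero.2 ?_, hx.2⟩
      rintro rfl
      exact (hG 0).1 hx.1 h0
    have := Finset.card_le_card hsub
    rw [Nat.card_Ico] at this
    omega
  · have hne1 : k ≠ k / n * n + 1 := by
      intro h
      obtain ⟨d, hd'⟩ : ∃ d, k / n = d + 1 := ⟨k / n - 1, by omega⟩
      apply hkM
      rw [h, hd', add_one_mul, add_assoc]
      exact hadd _ (le_card_nongaps n hn M h0 hadd hnM hn1 G hG d).1 _ hn1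
    have hmono : ((Finset.range (k / n * n + 2)).filter (· ∉ G)).card
        ≤ ((Finset.range k).filter (· ∉ G)).card :=
      Finset.card_le_card (Finset.filter_subset_filter _ (Finset.range_mono (by omega)))
    have hsplit := Finset.card_filter_add_card_filter_not (s := Finset.range k) (· ∈ G)
    have hswap : (Finset.range k).filter (· ∈ G) = G.filter (· < k) := by
      ext x; simp [and_comm]
    rw [hswap, Finset.card_range] at hsplit
    omega


/-- Let `p, q` be distinct odd primes, `g = (p-1)(q-1)/2`, and let
`M ⊆ ℕ` be an additive submonoid containing `p - 1` and `p` whose complement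
`G = ℕ \ M` is finite of cardinality `g`. Then the sum of the elements of `G`
(i.e. of the gaps `k_1 < ⋯ < k_g`) is at least `g(g+1)/2 + 2` if `q = 3`,
and at least `g(g+1)/2 + g(q-3)/2` if `q ≥ 5`. -/
theorem weierstrass_gap_weight_lower_bound (p q : ℕ) (hp : p.Prime) (hq : q.Prime)
    (hpo : Odd p) (hqo : Odd q) (hpq : p ≠ q)
    (g : ℕ) (hg : g = (p - 1) * (q - 1) / 2)
    (M : Set ℕ) (h0 : 0 ∈ M) (hadd : ∀ a ∈ M, ∀ b ∈ M, a + b ∈ M)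
    (hp1 : p - 1 ∈ M) (hpM : p ∈ M)
    (G : Finset ℕ) (hG : ∀ k : ℕ, k ∈ G ↔ k ∉ M) (hcard : G.card = g) :
    (q = 3 → g * (g + 1) / 2 + 2 ≤ ∑ k ∈ G, k) ∧
    (5 ≤ q → g * (g + 1) / 2 + g * (q - 3) / 2 ≤ ∑ k ∈ G, k) := by
  obtain ⟨m, rfl⟩ := hqo
  have hp3 : 3 ≤ p := by
    have := hp.two_le
    obtain ⟨r, rfl⟩ := hpo
    omega
  obtain ⟨n, rfl⟩ : ∃ n, p = n + 1 := ⟨p - 1, by omega⟩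
  have hgm : g = n * m := by
    rw [hg, Nat.add_sub_cancel, Nat.add_sub_cancel, mul_left_comm, Nat.mul_div_cancel_left _ two_pos]
  rw [Nat.add_sub_cancel] at hp1
  have hn : 2 ≤ n := by omega
  have hgap := card_add_le_of_gap n hn M h0 hadd hp1 hpM G hG
  have hsum : ∑ k ∈ G, ((fun r => r + 1 + 2 * ((r + 1) / n)) (G.filter (· < k)).card)
      ≤ ∑ k ∈ G, k := by
    refine Finset.sum_le_sum fun k hk => le_trans ?_ (hgap k hk)
    have hle : (G.filter (· < k)).card + 1 ≤ k := by
      have := hgap k hk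
      omega
    have := Nat.div_le_div_right (c := n) hle
    show _ + 1 + 2 * _ ≤ _
    omega
  rw [sum_rank (fun r => r + 1 + 2 * ((r + 1) / n)), hcard, Finset.sum_add_distrib, ← Finset.mul_sum] at hsum
  have hdiv := sum_div n m (by omega)
  rw [← hgm] at hdiv
  have htri : ∑ i ∈ Finset.range g, (i + 1) = g * (g + 1) / 2 := by
    have h := Finset.sum_range_id (g + 1)
    rw [Finset.sum_range_succ', add_zero, Nat.add_sub_cancel, mul_comm] at h
    exact h
  rw [htri, hdiv, ← mul_assoc, ← hgm] at hsum
  have hhalf : g * (2 * m + 1 - 3) / 2 = g * (m - 1) := by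
    rw [show 2 * m + 1 - 3 = 2 * (m - 1) by omega, mul_left_comm,
      Nat.mul_div_cancel_left _ two_pos]
  rw [hhalf]
  constructor <;> intro h <;> omega
end
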